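/- Let V be a finite set, let S ⊆ V be nonempty, and let d : V × V → ℝ be a nonnegative function satisfying the spreading constraints: for every T ⊆ S and every u ∈ T, ∑_{v ∈ T} d(u,v) ≥ |T| − |S|/2. If U ⊆ V is a set with d(u,v) ≤ 1/6 for all u, v ∈ U, then |U ∩ S| ≤ (2/3)|S|. -/

import Mathlib

/-- Lemma 4.4: in a spreading metric, any set of diameter at most `1/6` contains at most
two-thirds of `S`. -/
theorem small_diameter_set_in_spreading_metric
    {V : Type*} [Fintype V] [DecidableEq V] (S : Finset V) (hS : S.Nonempty)
    (d : V → V → ℝ) (hd : ∀ u v : V, 0 ≤ d u v)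
    (hspread : ∀ T ⊆ S, ∀ u ∈ T, (T.card : ℝ) - (S.card : ℝ) / 2 ≤ ∑ v ∈ T, d u v)
    (U : Finset V) (hU : ∀ u ∈ U, ∀ v ∈ U, d u v ≤ 1 / 6) :
    ((U ∩ S).card : ℝ) ≤ 2 / 3 * (S.card : ℝ) := by
  rcases (U ∩ S).eq_empty_or_nonempty with h | ⟨u, hu⟩
  · rw [h, Finset.card_empty, Nat.cast_zero]
    positivity
  · have hlow := hspread (U ∩ S) Finset.inter_subset_right u hu
    have hup : ∑ v ∈ U ∩ S, d u v ≤ (U ∩ S).card • (1 / 6 : ℝ) :=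
      Finset.sum_le_card_nsmul _ _ _ fun v hv =>
        hU u (Finset.mem_inter.mp hu).1 v (Finset.mem_inter.mp hv).1
    rw [nsmul_eq_mul] at hup
    -- Together these give `|U ∩ S| ≤ (3/5) |S|`, slightly more than needed.
    have hS0 : (0 : ℝ) ≤ S.card := Nat.cast_nonneg _
    linarith
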